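/- Let g be a finite-dimensional real Lie algebra with a norm and let P(g) = C([0,1], g) be the path group with multiplication (γ·δ)(t) = γ(t) + A_γ(t)(δ(t)). Let P(g)₀ be the set of all γ ∈ P(g) for which there exists a map Γ : [0,1] → P(g), continuously differentiable as a map from [0,1] into the Banach space C([0,1], g) with supremum norm, such that Γ(0) is the constant path 0, Γ(1) = γ, and for every s ∈ [0,1] one has ∫₀¹ A_{Γ(s)}(t)⁻¹ ((dΓ/ds)(s)(t)) dt = 0 in g. Then P(g)₀ is a normal subgroup of P(g). -/

import Mathlib

/-- `IsLieBracket B` says that the bilinear map `B = ⁅·,·⁆` makes the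
(finite-dimensional, normed) real vector space `g` into a real Lie algebra:
it is alternating and satisfies the Jacobi identity (in Leibniz form). -/
def IsLieBracket {g : Type*} [NormedAddCommGroup g] [NormedSpace ℝ g]
    (B : g →ₗ[ℝ] g →ₗ[ℝ] g) : Prop :=
  (∀ x : g, B x x = 0) ∧
  (∀ x y z : g, B x (B y z) = B (B x y) z + B y (B x z))

/-- The adjoint endomorphism `ad x = ⁅x, ·⁆` as a continuous linear map. -/
noncomputable def adL {g : Type*} [NormedAddCommGroup g] [NormedSpace ℝ g]
    [FiniteDimensional ℝ g] (B : g →ₗ[ℝ] g →ₗ[ℝ] g) (x : g) : g →L[ℝ] g :=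
  LinearMap.toContinuousLinearMap (B x)

/-- `IsTransport B γ A` says that `A : [0,1] → End(g)` is a continuously
differentiable path of linear endomorphisms of `g` with `A 0 = id` and
`A' t = ad (γ t) ∘ A t` for `t ∈ [0,1]` (one-sided derivatives at the
endpoints, and the derivative is continuous on `[0,1]`). -/
def IsTransport {g : Type*} [NormedAddCommGroup g] [NormedSpace ℝ g]
    [FiniteDimensional ℝ g] (B : g →ₗ[ℝ] g →ₗ[ℝ] g)
    (γ : ℝ → g) (A : ℝ → (g →L[ℝ] g)) : Prop :=
  A 0 = 1 ∧
  (∀ t ∈ Set.Icc (0:ℝ) 1,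
    HasDerivWithinAt A ((adL B (γ t)).comp (A t)) (Set.Icc (0:ℝ) 1) t) ∧
  ContinuousOn (fun t => (adL B (γ t)).comp (A t)) (Set.Icc (0:ℝ) 1)

/-- The path `A_γ : [0,1] → End(g)`, i.e. the unique continuously differentiable
solution of `A 0 = id`, `A' t = ad (γ t) ∘ A t` (chosen via choice; for a
continuous path `γ` it exists and is unique on `[0,1]`). -/
noncomputable def transport {g : Type*} [NormedAddCommGroup g] [NormedSpace ℝ g]
    [FiniteDimensional ℝ g] (B : g →ₗ[ℝ] g →ₗ[ℝ] g) (γ : ℝ → g) :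
    ℝ → (g →L[ℝ] g) :=
  letI := Classical.propDecidable (∃ A : ℝ → (g →L[ℝ] g), IsTransport B γ A)
  if h : ∃ A : ℝ → (g →L[ℝ] g), IsTransport B γ A then h.choose else fun _ => 1

/-- Extension of a continuous path `[0,1] → g` to all of `ℝ` (constant outside `[0,1]`). -/
noncomputable def pathExt {g : Type*} [TopologicalSpace g]
    (γ : C(Set.Icc (0:ℝ) 1, g)) : ℝ → g :=
  Set.IccExtend zero_le_one ⇑γ

/-- The Duistermaat–Kolk multiplication of paths: `(γ · δ)(t) = γ t + A_γ(t) (δ t)`,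
as a `g`-valued function on `[0,1]`. -/
noncomputable def pathMul {g : Type*} [NormedAddCommGroup g] [NormedSpace ℝ g]
    [FiniteDimensional ℝ g] (B : g →ₗ[ℝ] g →ₗ[ℝ] g)
    (γ δ : C(Set.Icc (0:ℝ) 1, g)) : Set.Icc (0:ℝ) 1 → g :=
  fun t => γ t + transport B (pathExt γ) t (δ t)

/-- The Duistermaat–Kolk inversion of paths: `ι(γ)(t) = -A_γ(t)⁻¹ (γ t)`,
as a `g`-valued function on `[0,1]`. -/
noncomputable def pathInv {g : Type*} [NormedAddCommGroup g] [NormedSpace ℝ g]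
    [FiniteDimensional ℝ g] (B : g →ₗ[ℝ] g →ₗ[ℝ] g)
    (γ : C(Set.Icc (0:ℝ) 1, g)) : Set.Icc (0:ℝ) 1 → g :=
  fun t => -(Ring.inverse (transport B (pathExt γ) t) (γ t))

/-- `InPathZero B γ` says that `γ` belongs to the subset `P(g)₀` of the path group
`P(g) = C([0,1], g)`: there is a continuously differentiable family
`Γ : [0,1] → P(g)` (with derivative `Γ'`) joining the constant path `0` to `γ`
such that `∫₀¹ A_{Γ s}(t)⁻¹ (Γ' s (t)) dt = 0` for all `s ∈ [0,1]`. -/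
noncomputable def InPathZero {g : Type*} [NormedAddCommGroup g] [NormedSpace ℝ g]
    [FiniteDimensional ℝ g] (B : g →ₗ[ℝ] g →ₗ[ℝ] g)
    (γ : C(Set.Icc (0:ℝ) 1, g)) : Prop :=
  ∃ Γ Γ' : ℝ → C(Set.Icc (0:ℝ) 1, g),
    (∀ s ∈ Set.Icc (0:ℝ) 1, HasDerivWithinAt Γ (Γ' s) (Set.Icc (0:ℝ) 1) s) ∧
    ContinuousOn Γ' (Set.Icc (0:ℝ) 1) ∧
    Γ 0 = 0 ∧ Γ 1 = γ ∧
    ∀ s ∈ Set.Icc (0:ℝ) 1,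
      (∫ t in (0:ℝ)..1,
        Ring.inverse (transport B (pathExt (Γ s)) t) (pathExt (Γ' s) t)) = 0

/-!
Along a curve `Γ` of paths with velocity `Γ'`, put `ω(t) = ∫₀ᵗ A_Γ⁻¹ Γ'`. Then the derivative of
`A_Γ` is `A_Γ ∘ ad ω`, and hence the primitive `ω` of a product `Γ · Δ` is `A_Δ⁻¹ ω_Γ + ω_Δ`.
So the curves with `ω(1) = 0` are closed under products; they are also closed under reversal and
include the constant curves, which gives inverses and conjugates.
-/

open scoped unitInterval

section PathCalculus

variable {E F : Type*} [NormedAddCommGroup E] [NormedSpace ℝ E]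
  [NormedAddCommGroup F] [NormedSpace ℝ F]

theorem continuous_pathExt {X : Type*} [TopologicalSpace X] (f : C(I, X)) :
    Continuous (pathExt f) :=
  f.continuous.Icc_extend'

theorem pathExt_of_mem {X : Type*} [TopologicalSpace X] (f : C(I, X)) {t : ℝ} (ht : t ∈ I) :
    pathExt f t = f ⟨t, ht⟩ :=
  Set.IccExtend_of_mem _ _ ht

theorem pathExt_coe {X : Type*} [TopologicalSpace X] (f : C(I, X)) (t : I) :
    pathExt f t = f t :=
  pathExt_of_mem f t.2

/-- The path `f` is continuously differentiable on `[0,1]` with derivative the path `f'`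
(one-sided derivatives at the endpoints). -/
def HasPathDeriv (f f' : C(I, F)) : Prop :=
  ∀ t : I, HasDerivWithinAt (pathExt f) (f' t) I t

namespace HasPathDeriv

variable {f f' g g' : C(I, F)}

theorem const (c : F) : HasPathDeriv (ContinuousMap.const I c) 0 :=
  fun _ => hasDerivWithinAt_const _ _ c

theorem add (hf : HasPathDeriv f f') (hg : HasPathDeriv g g') :
    HasPathDeriv (f + g) (f' + g') :=
  fun t => (hf t).add (hg t)

theorem clm_comp (L : E →L[ℝ] F) {f f' : C(I, E)} (hf : HasPathDeriv f f') :
    HasPathDeriv (L.compLeftContinuous ℝ I f) (L.compLeftContinuous ℝ I f') :=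
  fun t => L.hasFDerivAt.comp_hasDerivWithinAt _ (hf t)

theorem mul {R : Type*} [NormedRing R] [NormedAlgebra ℝ R] {f f' g g' : C(I, R)}
    (hf : HasPathDeriv f f') (hg : HasPathDeriv g g') :
    HasPathDeriv (f * g) (f' * g + f * g') := by
  intro t
  have h := (hf t).mul (hg t)
  rw [pathExt_coe, pathExt_coe] at h
  exact h

theorem unique (hf : HasPathDeriv f f') (hg : HasPathDeriv g f') (h0 : f 0 = g 0) :
    f = g := by
  have unique_diff := uniqueDiffOn_Icc (zero_lt_one (α := ℝ))
  have h := eq_of_derivWithin_eq (a := 0) (b := 1)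
    (fun t ht => (hf ⟨t, ht⟩).differentiableWithinAt)
    (fun t ht => (hg ⟨t, ht⟩).differentiableWithinAt)
    (fun t ht => by
      have ht' := Set.Ico_subset_Icc_self ht
      rw [(hf ⟨t, ht'⟩).derivWithin (unique_diff t ht'),
        (hg ⟨t, ht'⟩).derivWithin (unique_diff t ht')])
    (by simpa only [pathExt_of_mem _ unitInterval.zero_mem] using! h0)
  ext t
  simpa only [pathExt_coe] using h t t.2

end HasPathDeriv

/-- Pointwise application `(A, f) ↦ (t ↦ A t (f t))` of paths of operators to paths of vectors. -/
noncomputable def pathApply : C(I, E →L[ℝ] F) →L[ℝ] C(I, E) →L[ℝ] C(I, F) :=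
  LinearMap.mkContinuous₂
    (LinearMap.mk₂ ℝ
      (fun (A : C(I, E →L[ℝ] F)) (f : C(I, E)) =>
        (⟨fun t => A t (f t), A.continuous.clm_apply f.continuous⟩ : C(I, F)))
      (fun _ _ _ => by ext; simp) (fun _ _ _ => by ext; simp)
      (fun _ _ _ => by ext; simp) (fun _ _ _ => by ext; simp)) 1
    (fun A f => by
      rw [one_mul]
      exact (ContinuousMap.norm_le _ (by positivity)).2
        fun t => (A t).le_of_opNorm_le_of_le (A.norm_coe_le_norm t) (f.norm_coe_le_norm t))

theorem pathApply_apply (A : C(I, E →L[ℝ] F)) (f : C(I, E)) (t : I) :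
    pathApply A f t = A t (f t) :=
  rfl

theorem HasPathDeriv.pathApply {A A' : C(I, E →L[ℝ] F)} {f f' : C(I, E)}
    (hA : HasPathDeriv A A') (hf : HasPathDeriv f f') :
    HasPathDeriv (pathApply A f) (pathApply A' f + pathApply A f') := by
  intro t
  have h := (hA t).clm_apply (hf t)
  rw [pathExt_coe, pathExt_coe] at h
  exact h

theorem norm_integral_pathExt_le (f : C(I, F)) (t : I) :
    ‖∫ τ in (0 : ℝ)..t, pathExt f τ‖ ≤ ‖f‖ :=
  calc ‖∫ τ in (0 : ℝ)..t, pathExt f τ‖ ≤ ‖f‖ * |(t : ℝ) - 0| :=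
        intervalIntegral.norm_integral_le_of_norm_le_const fun _ _ => f.norm_coe_le_norm _
    _ ≤ ‖f‖ := by
        rw [sub_zero, abs_of_nonneg t.2.1]
        exact mul_le_of_le_one_right (norm_nonneg f) t.2.2

/-- The Volterra operator `f ↦ (t ↦ ∫₀ᵗ f)` on paths. -/
noncomputable def pathPrimitive : C(I, F) →L[ℝ] C(I, F) :=
  LinearMap.mkContinuous
    { toFun f :=
        ⟨fun t => ∫ τ in (0 : ℝ)..t, pathExt f τ,
          (intervalIntegral.continuous_primitive
            (fun a b => (continuous_pathExt f).intervalIntegrable a b) 0).comp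
            continuous_subtype_val⟩
      map_add' f g := by
        ext t
        exact intervalIntegral.integral_add ((continuous_pathExt f).intervalIntegrable _ _)
          ((continuous_pathExt g).intervalIntegrable _ _)
      map_smul' c f := by
        ext t
        exact intervalIntegral.integral_smul c _ } 1
    (fun f => by
      rw [one_mul]
      exact (ContinuousMap.norm_le _ (norm_nonneg f)).2 (norm_integral_pathExt_le f))

theorem pathPrimitive_apply_zero (f : C(I, F)) : pathPrimitive f 0 = 0 :=
  intervalIntegral.integral_same

theorem norm_pathPrimitive_le (f : C(I, F)) : ‖pathPrimitive f‖ ≤ ‖f‖ :=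
  (ContinuousMap.norm_le _ (norm_nonneg f)).2 (norm_integral_pathExt_le f)

theorem hasPathDeriv_pathPrimitive [CompleteSpace F] (f : C(I, F)) :
    HasPathDeriv (pathPrimitive f) f := by
  intro t
  have h := (intervalIntegral.integral_hasDerivAt_right
    ((continuous_pathExt f).intervalIntegrable 0 t)
    (continuous_pathExt f).aestronglyMeasurable.stronglyMeasurableAtFilter
    (continuous_pathExt f).continuousAt).hasDerivWithinAt (s := I)
  rw [pathExt_coe] at h
  exact h.congr (fun x hx => pathExt_of_mem _ hx) (pathExt_coe _ t)

theorem hasPathDeriv_iff_eq_const_add_pathPrimitive [CompleteSpace F] {f f' : C(I, F)} {c : F} :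
    HasPathDeriv f f' ∧ f 0 = c ↔ f = ContinuousMap.const I c + pathPrimitive f' := by
  have hasPathDeriv_rhs := (HasPathDeriv.const c).add (hasPathDeriv_pathPrimitive f')
  rw [zero_add] at hasPathDeriv_rhs
  constructor
  · rintro ⟨hf, hc⟩
    exact hf.unique hasPathDeriv_rhs (by simp [pathPrimitive_apply_zero, hc])
  · intro hf
    rw [hf]
    exact ⟨hasPathDeriv_rhs, by simp [pathPrimitive_apply_zero]⟩

end PathCalculus

section LinearODE

variable {F : Type*} [NormedAddCommGroup F] [NormedSpace ℝ F]

theorem isUnit_one_sub_of_norm_pow_le {R : Type*} [NormedRing R] [CompleteSpace R] {x : R}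
    {b : ℕ → ℝ} (hb : Summable b) (hx : ∀ n, ‖x ^ n‖ ≤ b n) : IsUnit (1 - x) :=
  have summable_pow : Summable fun n : ℕ => x ^ n := .of_norm_bounded hb hx
  isUnit_iff_exists.2 ⟨_, summable_pow.one_sub_mul_tsum_pow, summable_pow.tsum_pow_mul_one_sub⟩

theorem norm_pathPrimitive_comp_pathApply_pow_apply_le (A : C(I, F →L[ℝ] F)) (n : ℕ)
    (f : C(I, F)) (t : I) :
    ‖((pathPrimitive ∘L pathApply A) ^ n) f t‖ ≤ ‖A‖ ^ n * (t : ℝ) ^ n / n.factorial * ‖f‖ := by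
  induction n generalizing t with
  | zero => simpa using f.norm_coe_le_norm t
  | succ n ih =>
    set h := ((pathPrimitive ∘L pathApply A) ^ n) f
    have norm_integrand_le : ∀ τ ∈ Set.Ioc (0 : ℝ) t,
        ‖pathExt (pathApply A h) τ‖ ≤ ‖A‖ ^ (n + 1) / n.factorial * ‖f‖ * τ ^ n := by
      intro τ hτ
      have τ_mem : τ ∈ I := ⟨hτ.1.le, hτ.2.trans t.2.2⟩
      rw [pathExt_of_mem _ τ_mem]
      calc ‖A ⟨τ, τ_mem⟩ (h ⟨τ, τ_mem⟩)‖
          ≤ ‖A‖ * (‖A‖ ^ n * τ ^ n / n.factorial * ‖f‖) :=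
            (A ⟨τ, τ_mem⟩).le_of_opNorm_le_of_le (A.norm_coe_le_norm _) (ih _)
        _ = ‖A‖ ^ (n + 1) / n.factorial * ‖f‖ * τ ^ n := by ring
    rw [pow_succ']
    calc ‖∫ τ in (0 : ℝ)..t, pathExt (pathApply A h) τ‖
        ≤ ∫ τ in (0 : ℝ)..t, ‖A‖ ^ (n + 1) / n.factorial * ‖f‖ * τ ^ n :=
          intervalIntegral.norm_integral_le_of_norm_le t.2.1
            (Filter.Eventually.of_forall norm_integrand_le)
            (Continuous.intervalIntegrable (by fun_prop) _ _)
      _ = ‖A‖ ^ (n + 1) * (t : ℝ) ^ (n + 1) / (n + 1).factorial * ‖f‖ := by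
          rw [intervalIntegral.integral_const_mul, integral_pow, Nat.factorial_succ,
            zero_pow n.succ_ne_zero]
          push_cast
          field_simp
          ring

theorem norm_pathPrimitive_comp_pathApply_pow_le (A : C(I, F →L[ℝ] F)) (n : ℕ) :
    ‖(pathPrimitive ∘L pathApply A) ^ n‖ ≤ ‖A‖ ^ n / n.factorial := by
  refine ContinuousLinearMap.opNorm_le_bound _ (by positivity) fun f => ?_
  refine (ContinuousMap.norm_le _ (by positivity)).2 fun t => ?_
  refine (norm_pathPrimitive_comp_pathApply_pow_apply_le A n f t).trans ?_
  gcongr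
  exact mul_le_of_le_one_right (by positivity) (pow_le_one₀ t.2.1 t.2.2)

theorem isUnit_one_sub_pathPrimitive_comp_pathApply [CompleteSpace F] (A : C(I, F →L[ℝ] F)) :
    IsUnit (1 - pathPrimitive ∘L pathApply A) :=
  isUnit_one_sub_of_norm_pow_le (R := C(I, F) →L[ℝ] C(I, F))
    (Real.summable_pow_div_factorial ‖A‖) (norm_pathPrimitive_comp_pathApply_pow_le A)

theorem existsUnique_hasPathDeriv_pathApply [CompleteSpace F] (A : C(I, F →L[ℝ] F)) (c : F) :
    ∃! x : C(I, F), HasPathDeriv x (pathApply A x) ∧ x 0 = c := by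
  have bijective := ContinuousLinearMap.isUnit_iff_bijective.1
    (isUnit_one_sub_pathPrimitive_comp_pathApply A)
  simp only [hasPathDeriv_iff_eq_const_add_pathPrimitive, ← sub_eq_iff_eq_add]
  exact bijective.existsUnique (ContinuousMap.const I c)

end LinearODE

section OrderedExponential

variable {R : Type*} [NormedRing R] [NormedAlgebra ℝ R]

theorem hasPathDeriv_one : HasPathDeriv (1 : C(I, R)) 0 :=
  HasPathDeriv.const 1

variable [CompleteSpace R]

theorem existsUnique_hasPathDeriv_mul_left (a : C(I, R)) (c : R) :
    ∃! x : C(I, R), HasPathDeriv x (a * x) ∧ x 0 = c :=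
  existsUnique_hasPathDeriv_pathApply ((ContinuousLinearMap.mul ℝ R).compLeftContinuous ℝ I a) c

theorem existsUnique_hasPathDeriv_neg_mul_right (a : C(I, R)) (c : R) :
    ∃! x : C(I, R), HasPathDeriv x (-(x * a)) ∧ x 0 = c :=
  existsUnique_hasPathDeriv_pathApply
    ((-(ContinuousLinearMap.mul ℝ R).flip).compLeftContinuous ℝ I a) c

theorem existsUnique_hasPathDeriv_commutator (a : C(I, R)) (c : R) :
    ∃! x : C(I, R), HasPathDeriv x (a * x - x * a) ∧ x 0 = c :=
  existsUnique_hasPathDeriv_pathApply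
    ((ContinuousLinearMap.mul ℝ R - (ContinuousLinearMap.mul ℝ R).flip).compLeftContinuous ℝ I a) c

theorem exists_units_hasPathDeriv (a : C(I, R)) :
    ∃ u : C(I, R)ˣ, HasPathDeriv (u : C(I, R)) (a * u) ∧
      HasPathDeriv ((u⁻¹ : C(I, R)ˣ) : C(I, R)) (-((u⁻¹ : C(I, R)ˣ) * a)) ∧
      (u : C(I, R)) 0 = 1 := by
  obtain ⟨x, ⟨hx, hx0⟩, -⟩ := existsUnique_hasPathDeriv_mul_left a 1
  obtain ⟨y, ⟨hy, hy0⟩, -⟩ := existsUnique_hasPathDeriv_neg_mul_right a 1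
  have y_mul_x : y * x = 1 := by
    refine HasPathDeriv.unique (f' := 0) ?_ hasPathDeriv_one (by simp [hx0, hy0])
    have h := hy.mul hx
    rwa [neg_mul (y * a) x, mul_assoc, neg_add_cancel] at h
  have x_mul_y : x * y = 1 := by
    refine (existsUnique_hasPathDeriv_commutator a 1).unique ⟨?_, by simp [hx0, hy0]⟩
      ⟨by simpa using hasPathDeriv_one, rfl⟩
    have h := hx.mul hy
    rwa [mul_neg x (y * a), ← sub_eq_add_neg, mul_assoc, ← mul_assoc x] at h
  exact ⟨⟨x, y, x_mul_y, y_mul_x⟩, hx, hy, hx0⟩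

/-- The time-ordered exponential of a path `a` in a Banach algebra: the solution of
`u' = a * u`, `u 0 = 1`, as a unit of the algebra of paths. -/
noncomputable def orderedExp (a : C(I, R)) : C(I, R)ˣ :=
  (exists_units_hasPathDeriv a).choose

theorem hasPathDeriv_orderedExp (a : C(I, R)) :
    HasPathDeriv (orderedExp a).val (a * (orderedExp a).val) :=
  (exists_units_hasPathDeriv a).choose_spec.1

theorem hasPathDeriv_orderedExp_inv (a : C(I, R)) :
    HasPathDeriv (orderedExp a)⁻¹.val (-((orderedExp a)⁻¹.val * a)) :=
  (exists_units_hasPathDeriv a).choose_spec.2.1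

theorem orderedExp_apply_zero (a : C(I, R)) : (orderedExp a).val 0 = 1 :=
  (exists_units_hasPathDeriv a).choose_spec.2.2

theorem HasPathDeriv.eq_orderedExp {a x : C(I, R)} (hx : HasPathDeriv x (a * x))
    (hx0 : x 0 = 1) : x = orderedExp a :=
  (existsUnique_hasPathDeriv_mul_left a 1).unique ⟨hx, hx0⟩
    ⟨hasPathDeriv_orderedExp a, orderedExp_apply_zero a⟩

theorem orderedExp_mul_orderedExp (a b : C(I, R)) :
    orderedExp a * orderedExp b =
      orderedExp (a + (orderedExp a).val * b * (orderedExp a)⁻¹.val) := by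
  refine Units.ext (HasPathDeriv.eq_orderedExp ?_ (by simp [orderedExp_apply_zero]))
  have h := (hasPathDeriv_orderedExp a).mul (hasPathDeriv_orderedExp b)
  rw [Units.val_mul]
  rwa [add_mul a, mul_assoc _ _ (_ * _), Units.inv_mul_cancel_left, mul_assoc _ b, ← mul_assoc a]

theorem inv_orderedExp_apply (a : C(I, R)) (t : I) :
    Ring.inverse ((orderedExp a).val t) = (orderedExp a)⁻¹.val t := by
  have mul_inv : (orderedExp a).val t * (orderedExp a)⁻¹.val t = 1 :=
    DFunLike.congr_fun (orderedExp a).mul_inv t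
  have inv_mul : (orderedExp a)⁻¹.val t * (orderedExp a).val t = 1 :=
    DFunLike.congr_fun (orderedExp a).inv_mul t
  exact Ring.inverse_unit ⟨_, _, mul_inv, inv_mul⟩

theorem orderedExp_eq_one_add_pathPrimitive (a : C(I, R)) :
    (orderedExp a).val = 1 + pathPrimitive (a * (orderedExp a).val) :=
  hasPathDeriv_iff_eq_const_add_pathPrimitive.1
    ⟨hasPathDeriv_orderedExp a, orderedExp_apply_zero a⟩

theorem norm_orderedExp_le {a : C(I, R)} (ha : ‖a‖ ≤ 1 / 2) :
    ‖(orderedExp a).val‖ ≤ 2 * ‖(1 : C(I, R))‖ := by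
  have h : ‖(orderedExp a).val‖ ≤ ‖(1 : C(I, R))‖ + 1 / 2 * ‖(orderedExp a).val‖ :=
    calc ‖(orderedExp a).val‖
        = ‖1 + pathPrimitive (a * (orderedExp a).val)‖ := by
          rw [← orderedExp_eq_one_add_pathPrimitive]
      _ ≤ ‖(1 : C(I, R))‖ + ‖a * (orderedExp a).val‖ :=
          (norm_add_le _ _).trans (add_le_add_right (norm_pathPrimitive_le _) _)
      _ ≤ ‖(1 : C(I, R))‖ + 1 / 2 * ‖(orderedExp a).val‖ := by
          grw [norm_mul_le, ha]
  linarith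

theorem norm_orderedExp_sub_one_sub_pathPrimitive_le (a : C(I, R)) :
    ‖(orderedExp a).val - 1 - pathPrimitive a‖ ≤ ‖a‖ ^ 2 * ‖(orderedExp a).val‖ := by
  set u := (orderedExp a).val
  have sub_one_eq : u - 1 = pathPrimitive (a * u) :=
    sub_eq_iff_eq_add'.2 (orderedExp_eq_one_add_pathPrimitive a)
  have remainder_eq : u - 1 - pathPrimitive a = pathPrimitive (a * pathPrimitive (a * u)) := by
    rw [← sub_one_eq, mul_sub, mul_one, map_sub, ← sub_one_eq]
  calc ‖u - 1 - pathPrimitive a‖ ≤ ‖a‖ * ‖pathPrimitive (a * u)‖ := by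
        grw [remainder_eq, norm_pathPrimitive_le, norm_mul_le]
    _ ≤ ‖a‖ * (‖a‖ * ‖u‖) := by
        grw [norm_pathPrimitive_le, norm_mul_le]
    _ = ‖a‖ ^ 2 * ‖u‖ := by ring

theorem hasFDerivAt_orderedExp_zero :
    HasFDerivAt (fun a : C(I, R) => (orderedExp a).val)
      (pathPrimitive : C(I, R) →L[ℝ] C(I, R)) 0 := by
  have remainder_isBigO : (fun a : C(I, R) => (orderedExp a).val - 1 - pathPrimitive a)
      =O[nhds 0] fun a => ‖a - 0‖ ^ 2 := by
    refine .of_bound (2 * ‖(1 : C(I, R))‖) ?_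
    filter_upwards [Metric.closedBall_mem_nhds 0 one_half_pos] with a ha
    rw [mem_closedBall_zero_iff] at ha
    rw [sub_zero, norm_pow, norm_norm, mul_comm]
    grw [norm_orderedExp_sub_one_sub_pathPrimitive_le, norm_orderedExp_le ha]
  have h := ((remainder_isBigO.hasFDerivAt one_lt_two).add
    (pathPrimitive (F := R)).hasFDerivAt).add_const 1
  simpa using h

theorem orderedExp_eq_mul_orderedExp_conj (a b : C(I, R)) :
    orderedExp b =
      orderedExp a * orderedExp ((orderedExp a)⁻¹.val * (b - a) * (orderedExp a).val) := by
  rw [orderedExp_mul_orderedExp, mul_assoc _ (_ - _), Units.mul_inv_cancel_left,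
    mul_assoc, Units.mul_inv, mul_one, add_sub_cancel]

-- Factoring out `orderedExp a` reduces the derivative at `a` to the derivative at `0`.
theorem hasFDerivAt_orderedExp (a : C(I, R)) :
    HasFDerivAt (fun b : C(I, R) => (orderedExp b).val)
      (ContinuousLinearMap.mul ℝ C(I, R) (orderedExp a).val ∘L pathPrimitive ∘L
        ContinuousLinearMap.mulLeftRight ℝ C(I, R) (orderedExp a)⁻¹.val (orderedExp a).val) a := by
  set conj := ContinuousLinearMap.mulLeftRight ℝ C(I, R) (orderedExp a)⁻¹.val (orderedExp a).val
  have factorization : (fun b : C(I, R) => (orderedExp b).val) =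
      fun b : C(I, R) => (orderedExp a).val * orderedExp (conj (b - a)) :=
    funext fun b => congrArg Units.val (orderedExp_eq_mul_orderedExp_conj a b)
  have hasFDerivAt_conj : HasFDerivAt (fun b => conj (b - a)) conj a :=
    conj.hasFDerivAt.comp a ((hasFDerivAt_id a).sub_const a)
  have hasFDerivAt_factor :
      HasFDerivAt (fun b => (orderedExp (conj (b - a))).val) (pathPrimitive ∘L conj) a := by
    refine HasFDerivAt.comp (g := fun b : C(I, R) => (orderedExp b).val) a ?_ hasFDerivAt_conj
    rw [sub_self, map_zero]
    exact hasFDerivAt_orderedExp_zero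
  rw [factorization]
  exact (ContinuousLinearMap.mul ℝ C(I, R) (orderedExp a).val).hasFDerivAt.comp a
    hasFDerivAt_factor

theorem continuous_orderedExp : Continuous fun a : C(I, R) => (orderedExp a).val :=
  continuous_iff_continuousAt.2 fun a => (hasFDerivAt_orderedExp a).continuousAt

theorem continuous_orderedExp_inv : Continuous fun a : C(I, R) => (orderedExp a)⁻¹.val := by
  refine continuous_iff_continuousAt.2 fun a => ?_
  simpa only [Function.comp_def, Ring.inverse_unit] using
    ContinuousAt.comp (f := fun b : C(I, R) => (orderedExp b).val) (x := a)
      (NormedRing.inverse_continuousAt (orderedExp a)) continuous_orderedExp.continuousAt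

end OrderedExponential

section BanachLieAlgebra

variable {g : Type*} [NormedAddCommGroup g] [NormedSpace ℝ g] {L : g →L[ℝ] g →L[ℝ] g}

theorem IsLieBracket.skew (hL : IsLieBracket L.toLinearMap₁₂) (x y : g) : L x y = -L y x := by
  have h : L (x + y) (x + y) = 0 := hL.1 (x + y)
  have hx : L x x = 0 := hL.1 x
  have hy : L y y = 0 := hL.1 y
  rw [map_add, map_add, add_apply, add_apply, hx, hy, zero_add, add_zero, add_comm] at h
  exact eq_neg_of_add_eq_zero_left h

theorem IsLieBracket.ad_bracket (hL : IsLieBracket L.toLinearMap₁₂) (x y : g) :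
    L (L x y) = L x * L y - L y * L x := by
  ext z
  exact eq_sub_of_add_eq (hL.2 x y z).symm

variable (L) in
/-- The pointwise adjoint representation `γ ↦ (t ↦ ad (γ t))` on paths, for a bracket `L`. -/
noncomputable def adPath : C(I, g) →L[ℝ] C(I, g →L[ℝ] g) :=
  L.compLeftContinuous ℝ I

theorem IsLieBracket.pathApply_adPath_skew (hL : IsLieBracket L.toLinearMap₁₂) (γ δ : C(I, g)) :
    pathApply (adPath L γ) δ = -pathApply (adPath L δ) γ := by
  ext t
  exact hL.skew (γ t) (δ t)

theorem IsLieBracket.adPath_pathApply_adPath (hL : IsLieBracket L.toLinearMap₁₂) (γ δ : C(I, g)) :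
    adPath L (pathApply (adPath L γ) δ) = adPath L γ * adPath L δ - adPath L δ * adPath L γ := by
  ext1 t
  exact hL.ad_bracket (γ t) (δ t)

theorem pathApply_mul (A B : C(I, g →L[ℝ] g)) (f : C(I, g)) :
    pathApply (A * B) f = pathApply A (pathApply B f) :=
  rfl

theorem pathApply_one (f : C(I, g)) : pathApply (1 : C(I, g →L[ℝ] g)) f = f :=
  rfl

/-- The group `P(g)` of continuous paths in a Banach–Lie algebra `g` with bracket `L`. It wraps
`C(I, g)`, whose own algebraic structure is pointwise, and is indexed by `hL` because the group
laws rest on the bracket identities. -/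
@[ext]
structure PathGroup (hL : IsLieBracket L.toLinearMap₁₂) where
  toPath : C(I, g)

instance {hL : IsLieBracket L.toLinearMap₁₂} : One (PathGroup hL) :=
  ⟨⟨0⟩⟩

theorem PathGroup.toPath_one {hL : IsLieBracket L.toLinearMap₁₂} : (1 : PathGroup hL).toPath = 0 :=
  rfl

variable [CompleteSpace g]

variable (L) in
/-- The path `A_γ`, as a unit of the algebra of paths in `g →L[ℝ] g`. -/
noncomputable def pathTransport (γ : C(I, g)) : C(I, g →L[ℝ] g)ˣ :=
  orderedExp (adPath L γ)

variable (L) in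
theorem hasPathDeriv_pathTransport (γ : C(I, g)) :
    HasPathDeriv (pathTransport L γ).val (adPath L γ * (pathTransport L γ).val) :=
  hasPathDeriv_orderedExp _

variable (L) in
theorem hasPathDeriv_pathTransport_inv (γ : C(I, g)) :
    HasPathDeriv (pathTransport L γ)⁻¹.val (-((pathTransport L γ)⁻¹.val * adPath L γ)) :=
  hasPathDeriv_orderedExp_inv _

variable (L) in
theorem pathTransport_apply_zero (γ : C(I, g)) : (pathTransport L γ).val 0 = 1 :=
  orderedExp_apply_zero _

-- Both sides solve `X' = ad γ * X`, `X 0 = ad y`.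
theorem pathTransport_mul_adPath_const (hL : IsLieBracket L.toLinearMap₁₂) (γ : C(I, g)) (y : g) :
    (pathTransport L γ).val * adPath L (.const I y) =
      adPath L (pathApply (pathTransport L γ).val (.const I y)) * (pathTransport L γ).val := by
  set a := adPath L γ
  set A := (pathTransport L γ).val
  set b := adPath L (pathApply A (.const I y)) with hb
  have hasPathDeriv_A : HasPathDeriv A (a * A) := hasPathDeriv_pathTransport L γ
  have A_zero : A 0 = 1 := pathTransport_apply_zero L γ
  have hasPathDeriv_b : HasPathDeriv b (a * b - b * a) := by
    have h := (hasPathDeriv_A.pathApply (.const y)).clm_comp L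
    rw [map_zero, add_zero] at h
    rw [hb, ← hL.adPath_pathApply_adPath]
    exact h
  have hasPathDeriv_left : HasPathDeriv (A * adPath L (.const I y))
      (a * (A * adPath L (.const I y))) := by
    have h := hasPathDeriv_A.mul (.const (L y))
    rwa [mul_zero, add_zero, mul_assoc] at h
  have hasPathDeriv_right : HasPathDeriv (b * A) (a * (b * A)) := by
    have h := hasPathDeriv_b.mul hasPathDeriv_A
    rwa [sub_mul (a * b) (b * a) A, mul_assoc a b A, mul_assoc b a A, sub_add_cancel] at h
  refine (existsUnique_hasPathDeriv_mul_left a (L y)).unique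
    ⟨hasPathDeriv_left, ?_⟩ ⟨hasPathDeriv_right, ?_⟩
  · rw [ContinuousMap.mul_apply, A_zero, one_mul]
    rfl
  · rw [ContinuousMap.mul_apply, A_zero, mul_one]
    exact congrArg (fun B : g →L[ℝ] g => L (B y)) A_zero

theorem pathTransport_mul_adPath (hL : IsLieBracket L.toLinearMap₁₂) (γ δ : C(I, g)) :
    (pathTransport L γ).val * adPath L δ =
      adPath L (pathApply (pathTransport L γ).val δ) * (pathTransport L γ).val := by
  ext1 t
  exact DFunLike.congr_fun (pathTransport_mul_adPath_const hL γ (δ t)) t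

variable (L) in
/-- The multiplication `(γ · δ)(t) = γ t + A_γ(t) (δ t)` of paths. -/
noncomputable def pathProd (γ δ : C(I, g)) : C(I, g) :=
  γ + pathApply (pathTransport L γ).val δ

variable (L) in
/-- The inversion `ι(γ)(t) = -A_γ(t)⁻¹ (γ t)` of paths. -/
noncomputable def pathInverse (γ : C(I, g)) : C(I, g) :=
  -pathApply (pathTransport L γ)⁻¹.val γ

theorem pathTransport_pathProd (hL : IsLieBracket L.toLinearMap₁₂) (γ δ : C(I, g)) :
    pathTransport L (pathProd L γ δ) = pathTransport L γ * pathTransport L δ := by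
  have conj_eq : (pathTransport L γ).val * adPath L δ * (pathTransport L γ)⁻¹.val =
      adPath L (pathApply (pathTransport L γ).val δ) := by
    rw [pathTransport_mul_adPath hL, Units.mul_inv_cancel_right]
  rw [pathProd, pathTransport, map_add, ← conj_eq]
  exact (orderedExp_mul_orderedExp _ _).symm

theorem pathProd_assoc (hL : IsLieBracket L.toLinearMap₁₂) (γ δ ε : C(I, g)) :
    pathProd L (pathProd L γ δ) ε = pathProd L γ (pathProd L δ ε) := by
  rw [pathProd, pathTransport_pathProd hL, Units.val_mul, pathApply_mul]
  simp only [pathProd, map_add, add_assoc]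

theorem pathProd_zero (γ : C(I, g)) : pathProd L γ 0 = γ := by
  rw [pathProd, map_zero, add_zero]

theorem pathProd_pathInverse (γ : C(I, g)) : pathProd L γ (pathInverse L γ) = 0 := by
  rw [pathProd, pathInverse, map_neg, ← pathApply_mul, Units.mul_inv, pathApply_one, add_neg_cancel]

namespace PathGroup

variable {hL : IsLieBracket L.toLinearMap₁₂}

noncomputable instance : Mul (PathGroup hL) :=
  ⟨fun γ δ => ⟨pathProd L γ.toPath δ.toPath⟩⟩

noncomputable instance : Inv (PathGroup hL) :=
  ⟨fun γ => ⟨pathInverse L γ.toPath⟩⟩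

noncomputable instance : Group (PathGroup hL) :=
  Group.ofRightAxioms
    (fun γ δ ε => PathGroup.ext (pathProd_assoc hL γ.toPath δ.toPath ε.toPath))
    (fun γ => PathGroup.ext (pathProd_zero γ.toPath))
    (fun γ => PathGroup.ext (pathProd_pathInverse γ.toPath))

theorem toPath_mul (γ δ : PathGroup hL) : (γ * δ).toPath = pathProd L γ.toPath δ.toPath :=
  rfl

end PathGroup

variable (L) in
/-- The operator `γ' ↦ (t ↦ ∫₀ᵗ A_γ(τ)⁻¹ (γ' τ) dτ)`. If `u` is the path in a Lie group starting
at `1` with right logarithmic derivative `γ`, this is the left logarithmic derivative `u⁻¹ δu` of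
the variation of `u` induced by the variation `γ'` of `γ`. -/
noncomputable def pathMaurerCartan (γ : C(I, g)) : C(I, g) →L[ℝ] C(I, g) :=
  pathPrimitive ∘L pathApply (pathTransport L γ)⁻¹.val

variable (L) in
theorem hasPathDeriv_pathMaurerCartan (γ γ' : C(I, g)) :
    HasPathDeriv (pathMaurerCartan L γ γ') (pathApply (pathTransport L γ)⁻¹.val γ') :=
  hasPathDeriv_pathPrimitive _

theorem pathMaurerCartan_pathProd (hL : IsLieBracket L.toLinearMap₁₂) (γ γ' δ δ' : C(I, g)) :
    pathMaurerCartan L (pathProd L γ δ)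
        (γ' + (pathApply ((pathTransport L γ).val * adPath L (pathMaurerCartan L γ γ')) δ +
          pathApply (pathTransport L γ).val δ')) =
      pathApply (pathTransport L δ)⁻¹.val (pathMaurerCartan L γ γ') +
        pathMaurerCartan L δ δ' := by
  set A := pathTransport L γ
  set D := pathTransport L δ with hD
  set ω := pathMaurerCartan L γ γ'
  have hasPathDeriv_right : HasPathDeriv (pathApply D⁻¹.val ω + pathMaurerCartan L δ δ')
      (pathApply (-(D⁻¹.val * adPath L δ)) ω + pathApply D⁻¹.val (pathApply A⁻¹.val γ') +
        pathApply D⁻¹.val δ') :=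
    ((hasPathDeriv_pathTransport_inv L δ).pathApply (hasPathDeriv_pathMaurerCartan L γ γ')).add
      (hasPathDeriv_pathMaurerCartan L δ δ')
  have transport_inv_cancel : ∀ f, pathApply A⁻¹.val (pathApply A.val f) = f := fun f => by
    rw [← pathApply_mul, A.inv_mul, pathApply_one]
  refine (hasPathDeriv_pathMaurerCartan L _ _).unique ?_ ?_
  · convert hasPathDeriv_right using 1
    calc pathApply (pathTransport L (pathProd L γ δ))⁻¹.val
          (γ' + (pathApply (A.val * adPath L ω) δ + pathApply A.val δ'))
        = pathApply D⁻¹.val (pathApply A⁻¹.val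
            (γ' + (pathApply A.val (pathApply (adPath L ω) δ) + pathApply A.val δ'))) := by
          rw [pathTransport_pathProd hL, mul_inv_rev]
          rfl
      _ = pathApply D⁻¹.val (pathApply A⁻¹.val γ' + (-pathApply (adPath L δ) ω + δ')) := by
          rw [map_add (pathApply A⁻¹.val), map_add (pathApply A⁻¹.val), transport_inv_cancel,
            transport_inv_cancel, hL.pathApply_adPath_skew]
      _ = pathApply (-(D⁻¹.val * adPath L δ)) ω + pathApply D⁻¹.val (pathApply A⁻¹.val γ') +
            pathApply D⁻¹.val δ' := by
          rw [map_add, map_add, map_neg, map_neg, neg_apply, pathApply_mul]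
          abel
  · simp [ω, hD, pathMaurerCartan, pathApply_apply, pathPrimitive_apply_zero]

theorem pathPrimitive_adPath (γ : C(I, g)) :
    pathPrimitive (adPath L γ) = adPath L (pathPrimitive γ) := by
  ext1 t
  exact L.intervalIntegral_comp_comm ((continuous_pathExt γ).intervalIntegrable 0 t)

theorem hasFDerivAt_pathTransport (hL : IsLieBracket L.toLinearMap₁₂) (γ : C(I, g)) :
    HasFDerivAt (fun δ => (pathTransport L δ).val)
      (ContinuousLinearMap.mul ℝ C(I, g →L[ℝ] g) (pathTransport L γ).val ∘L adPath L ∘L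
        pathMaurerCartan L γ) γ := by
  refine ((hasFDerivAt_orderedExp (adPath L γ)).comp γ (adPath L).hasFDerivAt).congr_fderiv ?_
  ext1 γ'
  have conj_eq : (pathTransport L γ)⁻¹.val * adPath L γ' * (pathTransport L γ).val =
      adPath L (pathApply (pathTransport L γ)⁻¹.val γ') := by
    rw [mul_assoc _ (adPath L γ'), Units.inv_mul_eq_iff_eq_mul, pathTransport_mul_adPath hL,
      ← pathApply_mul, Units.mul_inv, pathApply_one]
  change (pathTransport L γ).val *
    pathPrimitive ((pathTransport L γ)⁻¹.val * adPath L γ' * (pathTransport L γ).val) = _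
  rw [conj_eq, pathPrimitive_adPath]
  rfl

variable (L) in
theorem continuous_pathTransport : Continuous fun γ => (pathTransport L γ).val :=
  continuous_orderedExp.comp (adPath L).continuous

variable (L) in
theorem continuous_pathMaurerCartan : Continuous (pathMaurerCartan L) :=
  continuous_const.clm_comp (pathApply.continuous.comp
    (continuous_orderedExp_inv.comp (adPath L).continuous))

theorem hasDerivWithinAt_pathProd (hL : IsLieBracket L.toLinearMap₁₂) {Γ Δ : ℝ → C(I, g)}
    {Γ' Δ' : C(I, g)} {s : ℝ} {S : Set ℝ} (hΓ : HasDerivWithinAt Γ Γ' S s)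
    (hΔ : HasDerivWithinAt Δ Δ' S s) :
    HasDerivWithinAt (fun s => pathProd L (Γ s) (Δ s))
      (Γ' + (pathApply ((pathTransport L (Γ s)).val * adPath L (pathMaurerCartan L (Γ s) Γ'))
          (Δ s) +
        pathApply (pathTransport L (Γ s)).val Δ')) S s := by
  have hasDerivWithinAt_transport := HasFDerivAt.comp_hasDerivWithinAt
    (l := fun γ => (pathTransport L γ).val) s (hasFDerivAt_pathTransport hL (Γ s)) hΓ
  rw [add_comm (pathApply _ _)]
  exact hΓ.add (pathApply.hasDerivWithinAt_of_bilinear hasDerivWithinAt_transport hΔ)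

variable (L) in
/-- The curve `Γ` of paths is continuously differentiable on `[0,1]`, and its derivative satisfies
`∫₀¹ A_{Γ s}(t)⁻¹ (Γ' s t) dt = 0` throughout. -/
def IsHorizontal (Γ : ℝ → C(I, g)) : Prop :=
  ∃ Γ' : ℝ → C(I, g), (∀ s ∈ I, HasDerivWithinAt Γ (Γ' s) I s) ∧ ContinuousOn Γ' I ∧
    ∀ s ∈ I, pathMaurerCartan L (Γ s) (Γ' s) 1 = 0

namespace IsHorizontal

variable (L) in
theorem const (γ : C(I, g)) : IsHorizontal L fun _ => γ :=
  ⟨0, fun _ _ => hasDerivWithinAt_const _ _ _, continuousOn_const, fun _ _ => by simp⟩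

theorem reverse {Γ : ℝ → C(I, g)} (hΓ : IsHorizontal L Γ) : IsHorizontal L fun s => Γ (1 - s) := by
  obtain ⟨Γ', hasDeriv, continuousOn_deriv, maurerCartan_eq_zero⟩ := hΓ
  have mapsTo_one_sub : Set.MapsTo (fun s : ℝ => 1 - s) I I :=
    fun _ => Set.Icc.one_sub_mem
  refine ⟨fun s => -Γ' (1 - s), fun s hs => ?_,
    (continuousOn_deriv.comp (by fun_prop) mapsTo_one_sub).neg, fun s hs => ?_⟩
  · simpa only [neg_smul, one_smul] using! HasDerivWithinAt.scomp s
      (hasDeriv _ (mapsTo_one_sub hs)) ((hasDerivWithinAt_id s I).const_sub 1) mapsTo_one_sub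
  · rw [map_neg, ContinuousMap.neg_apply, maurerCartan_eq_zero _ (mapsTo_one_sub hs), neg_zero]

theorem pathProd (hL : IsLieBracket L.toLinearMap₁₂) {Γ Δ : ℝ → C(I, g)}
    (hΓ : IsHorizontal L Γ) (hΔ : IsHorizontal L Δ) :
    IsHorizontal L fun s => pathProd L (Γ s) (Δ s) := by
  obtain ⟨Γ', hasDeriv_Γ, continuousOn_Γ', maurerCartan_Γ⟩ := hΓ
  obtain ⟨Δ', hasDeriv_Δ, continuousOn_Δ', maurerCartan_Δ⟩ := hΔ
  have continuousOn_Γ : ContinuousOn Γ I := fun s hs => (hasDeriv_Γ s hs).continuousWithinAt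
  have continuousOn_Δ : ContinuousOn Δ I := fun s hs => (hasDeriv_Δ s hs).continuousWithinAt
  have continuousOn_transport := (continuous_pathTransport L).comp_continuousOn continuousOn_Γ
  have continuousOn_maurerCartan :=
    ((continuous_pathMaurerCartan L).comp_continuousOn continuousOn_Γ).clm_apply continuousOn_Γ'
  refine ⟨_, fun s hs => hasDerivWithinAt_pathProd hL (hasDeriv_Γ s hs) (hasDeriv_Δ s hs),
    continuousOn_Γ'.add (.add ?_ ?_), fun s hs => ?_⟩
  · exact (pathApply.continuous.comp_continuousOn (continuousOn_transport.mul
      ((adPath L).continuous.comp_continuousOn continuousOn_maurerCartan))).clm_apply continuousOn_Δ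
  · exact (pathApply.continuous.comp_continuousOn continuousOn_transport).clm_apply continuousOn_Δ'
  · rw [pathMaurerCartan_pathProd hL, ContinuousMap.add_apply, pathApply_apply,
      maurerCartan_Γ s hs, maurerCartan_Δ s hs, map_zero, add_zero]

end IsHorizontal

/-- The subgroup `P(g)₀` of the paths joined to the constant path `0` by a horizontal curve. -/
def pathZero (hL : IsLieBracket L.toLinearMap₁₂) : Subgroup (PathGroup hL) where
  carrier := {γ | ∃ Γ, IsHorizontal L Γ ∧ Γ 0 = 0 ∧ Γ 1 = γ.toPath}
  one_mem' := ⟨_, .const L 0, rfl, rfl⟩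
  mul_mem' := by
    rintro γ δ ⟨Γ, hΓ, Γ_zero, Γ_one⟩ ⟨Δ, hΔ, Δ_zero, Δ_one⟩
    refine ⟨_, hΓ.pathProd hL hΔ, ?_, ?_⟩
    · simp only [Γ_zero, Δ_zero, pathProd_zero]
    · simp only [Γ_one, Δ_one, PathGroup.toPath_mul]
  inv_mem' := by
    rintro γ ⟨Γ, hΓ, Γ_zero, Γ_one⟩
    refine ⟨_, (IsHorizontal.const L γ⁻¹.toPath).pathProd hL hΓ.reverse, ?_, ?_⟩
    · simp only [sub_zero, Γ_one, ← PathGroup.toPath_mul, inv_mul_cancel, PathGroup.toPath_one]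
    · simp only [sub_self, Γ_zero, pathProd_zero]

theorem pathZero_normal_subgroup_general (hL : IsLieBracket L.toLinearMap₁₂) :
    (pathZero hL).Normal := by
  refine ⟨?_⟩
  rintro δ ⟨Δ, hΔ, Δ_zero, Δ_one⟩ γ
  refine ⟨_, ((IsHorizontal.const L γ.toPath).pathProd hL hΔ).pathProd hL (.const L γ⁻¹.toPath),
    ?_, ?_⟩
  · simp only [Δ_zero, pathProd_zero, ← PathGroup.toPath_mul, mul_inv_cancel, PathGroup.toPath_one]
  · simp only [Δ_one, PathGroup.toPath_mul]

end BanachLieAlgebra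

section FiniteDimensional

variable {g : Type*} [NormedAddCommGroup g] [NormedSpace ℝ g] [FiniteDimensional ℝ g]
  {B : g →ₗ[ℝ] g →ₗ[ℝ] g}

theorem isTransport_pathTransport (γ : C(I, g)) :
    IsTransport B (pathExt γ) (pathExt (pathTransport B.toContinuousBilinearMap γ).val) := by
  set L := B.toContinuousBilinearMap
  have continuous_ad : Continuous fun t => adL B (pathExt γ t) :=
    L.continuous.comp (continuous_pathExt γ)
  refine ⟨?_, fun t ht => ?_,
    (continuous_ad.clm_comp (continuous_pathExt _)).continuousOn⟩
  · rw [pathExt_of_mem _ unitInterval.zero_mem]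
    exact pathTransport_apply_zero L γ
  · rw [pathExt_of_mem _ ht, pathExt_of_mem _ ht]
    exact hasPathDeriv_pathTransport L γ ⟨t, ht⟩

theorem IsTransport.eq_pathTransport {γ : C(I, g)} {A : ℝ → g →L[ℝ] g}
    (hA : IsTransport B (pathExt γ) A) (t : I) :
    A t = (pathTransport B.toContinuousBilinearMap γ).val t := by
  obtain ⟨A_zero, hasDeriv, -⟩ := hA
  have continuous_A : Continuous fun t : I => A t :=
    continuousOn_iff_continuous_domRestrict.1 fun t ht => (hasDeriv t ht).continuousWithinAt
  have hasPathDeriv_A : HasPathDeriv (⟨fun t : I => A t, continuous_A⟩ : C(I, g →L[ℝ] g))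
      (adPath B.toContinuousBilinearMap γ * ⟨fun t : I => A t, continuous_A⟩) := by
    intro t
    have h := hasDeriv t t.2
    rw [pathExt_coe] at h
    exact h.congr (fun x hx => pathExt_of_mem _ hx) (pathExt_coe _ t)
  exact DFunLike.congr_fun (hasPathDeriv_A.eq_orderedExp A_zero) t

theorem transport_pathExt (γ : C(I, g)) (t : I) :
    transport B (pathExt γ) t = (pathTransport B.toContinuousBilinearMap γ).val t := by
  have exists_isTransport : ∃ A, IsTransport B (pathExt γ) A := ⟨_, isTransport_pathTransport γ⟩
  rw [transport, dif_pos exists_isTransport]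
  exact exists_isTransport.choose_spec.eq_pathTransport t

theorem forall_eq_pathMul_iff {γ δ m : C(I, g)} :
    (∀ t, m t = pathMul B γ δ t) ↔ m = pathProd B.toContinuousBilinearMap γ δ := by
  simp only [pathMul, transport_pathExt, ContinuousMap.ext_iff]
  rfl

theorem forall_eq_pathInv_iff {γ ι : C(I, g)} :
    (∀ t, ι t = pathInv B γ t) ↔ ι = pathInverse B.toContinuousBilinearMap γ := by
  simp only [pathInv, transport_pathExt, pathTransport, inv_orderedExp_apply,
    ContinuousMap.ext_iff]
  rfl

theorem pathMaurerCartan_apply_one (γ γ' : C(I, g)) :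
    pathMaurerCartan B.toContinuousBilinearMap γ γ' 1 =
      ∫ t in (0 : ℝ)..1, Ring.inverse (transport B (pathExt γ) t) (pathExt γ' t) := by
  change ∫ t in (0 : ℝ)..1, pathExt _ t = _
  refine intervalIntegral.integral_congr fun t ht => ?_
  rw [Set.uIcc_of_le zero_le_one] at ht
  have transport_t := transport_pathExt (B := B) γ ⟨t, ht⟩
  simp only at transport_t ⊢
  rw [transport_t, pathTransport, inv_orderedExp_apply, pathExt_of_mem _ ht, pathExt_of_mem _ ht]
  rfl

theorem inPathZero_iff_mem_pathZero (hB : IsLieBracket B) {γ : C(I, g)} :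
    InPathZero B γ ↔ ⟨γ⟩ ∈ pathZero (L := B.toContinuousBilinearMap) hB := by
  simp only [InPathZero, ← pathMaurerCartan_apply_one]
  constructor
  · rintro ⟨Γ, Γ', hasDeriv, continuousOn_deriv, Γ_zero, Γ_one, horizontal⟩
    exact ⟨Γ, ⟨Γ', hasDeriv, continuousOn_deriv, horizontal⟩, Γ_zero, Γ_one⟩
  · rintro ⟨Γ, ⟨Γ', hasDeriv, continuousOn_deriv, horizontal⟩, Γ_zero, Γ_one⟩
    exact ⟨Γ, Γ', hasDeriv, continuousOn_deriv, Γ_zero, Γ_one, horizontal⟩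

end FiniteDimensional

/-- `P(g)₀` is a normal subgroup of the path group `P(g) = C([0,1], g)`: it
contains the identity (the constant path `0`), is closed under the
multiplication `(γ·δ)(t) = γ t + A_γ(t)(δ t)` and the inversion
`ι(γ)(t) = -A_γ(t)⁻¹(γ t)`, and is stable under conjugation `δ ↦ γ·(δ·ι(γ))`. -/
theorem pathZero_normal_subgroup {g : Type*}
    [NormedAddCommGroup g] [NormedSpace ℝ g] [FiniteDimensional ℝ g]
    (B : g →ₗ[ℝ] g →ₗ[ℝ] g) (hB : IsLieBracket B) :
    InPathZero B 0 ∧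
    (∀ γ δ : C(Set.Icc (0:ℝ) 1, g), InPathZero B γ → InPathZero B δ →
      ∀ m : C(Set.Icc (0:ℝ) 1, g), (∀ t, m t = pathMul B γ δ t) → InPathZero B m) ∧
    (∀ γ : C(Set.Icc (0:ℝ) 1, g), InPathZero B γ →
      ∀ ι : C(Set.Icc (0:ℝ) 1, g), (∀ t, ι t = pathInv B γ t) → InPathZero B ι) ∧
    (∀ γ δ : C(Set.Icc (0:ℝ) 1, g), InPathZero B δ →
      ∀ ι m c : C(Set.Icc (0:ℝ) 1, g),
        (∀ t, ι t = pathInv B γ t) → (∀ t, m t = pathMul B δ ι t) →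
        (∀ t, c t = pathMul B γ m t) → InPathZero B c) := by
  let L := B.toContinuousBilinearMap
  have hL : IsLieBracket L.toLinearMap₁₂ := hB
  have normal : (pathZero hL).Normal := pathZero_normal_subgroup_general hL
  simp only [inPathZero_iff_mem_pathZero hB, forall_eq_pathMul_iff, forall_eq_pathInv_iff,
    forall_eq]
  refine ⟨one_mem (pathZero hL), fun γ δ => mul_mem (a := (⟨γ⟩ : PathGroup hL)) (b := ⟨δ⟩),
    fun γ => inv_mem (x := (⟨γ⟩ : PathGroup hL)), ?_⟩
  rintro γ δ hδ _ _ _ rfl rfl rfl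
  have conj_mem := normal.conj_mem ⟨δ⟩ hδ ⟨γ⟩
  rw [mul_assoc] at conj_mem
  exact conj_mem
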